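/- The family (e_{a,i,r}), for a ∈ A and i ∈ Y'∩I_{≤[r]}, is a Banach basis of C^r(𝒪_F,J',(d_σ)_{σ∈S∖J'}): the map c₀(A×(Y'∩I_{≤[r]})) → C^r(𝒪_F,J',(d_σ)_{σ∈S∖J'}) sending (b_{a,i}) to Σ_{a∈A} Σ_{i∈Y'∩I_{≤[r]}} b_{a,i}·e_{a,i,r} is an isomorphism of Banach spaces. -/

import Mathlib

/-!
Setting (cf. the paper's notations): `O` plays the role of the ring of integers `𝒪_F` of a
finite extension `F` of `ℚ_p`, `E` is the coefficient field (a finite extension of `ℚ_p`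
with its p-adic absolute value, normalized by `|x| = p^{-val_F(x)}`, `val_F(p) = [F:ℚ_p]`),
`S` is the (finite) set of `ℚ_p`-algebra embeddings `F ↪ E`, restricted here to `O`,
`ν : O → ℝ` is the absolute value on `O` (the common restriction of the norm of `E` along any
embedding), `ϖ` is a fixed uniformizer with `ν ϖ = q⁻¹` where `q = p^f` is the cardinality
of the residue field, and `u * ϖ ^ e = p` records the ramification index `e`.
-/

open scoped Classical

noncomputable section

namespace CrPaper

structure Setting (S O E : Type*) [Fintype S] [CommRing O] [NormedField E] where
  q : ℝ
  p : ℕ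
  fdeg : ℕ
  hp : p.Prime
  hfdeg : 0 < fdeg
  hq : q = (p : ℝ) ^ fdeg
  emb : S → O →+* E
  emb_inj : ∀ s, Function.Injective (emb s)
  emb_distinct : Function.Injective emb
  ν : O → ℝ
  norm_emb : ∀ (s) (z : O), ‖emb s z‖ = ν z
  norm_le_one : ∀ (s) (z : O), ‖emb s z‖ ≤ 1
  norm_add_max : ∀ x y : E, ‖x + y‖ ≤ max ‖x‖ ‖y‖
  ϖ : O
  ν_ϖ : ν ϖ = q⁻¹
  mem_ball_iff : ∀ (y : O) (n : ℕ), (∃ z, y = ϖ ^ n * z) ↔ ν y ≤ q⁻¹ ^ n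
  ram : ∃ (e : ℕ) (u : O), 0 < e ∧ IsUnit u ∧ u * ϖ ^ e = (p : O)

variable {S O E : Type*} [Fintype S] [DecidableEq S] [CommRing O] [IsDomain O]
  [NormedField E] [CompleteSpace E] [CharZero E]

/-- The total weight `|i| = ∑ i_σ` of a multi-index. -/
def wt (i : S → ℕ) : ℕ := ∑ s, i s

/-- `i! = ∏ i_σ!` for a multi-index. -/
def mfact (i : S → ℕ) : ℕ := ∏ s, (i s).factorial

/-- The (finite) set `I_{≤N}` of multi-indices of total weight `≤ N`. -/
def Idx (S : Type*) [Fintype S] [DecidableEq S] (N : ℕ) : Finset (S → ℕ) :=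
  (Fintype.piFinset fun _ : S => Finset.range (N + 1)).filter fun i => wt i ≤ N

/-- `z^i = ∏_σ σ(z)^{i_σ}`. -/
def mpow (St : Setting S O E) (z : O) (i : S → ℕ) : E := ∏ s, St.emb s z ^ i s

/-- The Taylor remainder `ε_{f,N}(x,y) = f(x+y) − ∑_{|i|≤N} D_i f(x) y^i / i!`. -/
def epsTay (St : Setting S O E) (N : ℕ) (f : O → E) (D : (S → ℕ) → O → E) (x y : O) : E :=
  f (x + y) - ∑ i ∈ Idx S N, D i x * mpow St y i / (mfact i : E)

/-- `f` is of class `C^r` with the family of bounded functions `D` witnessing the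
definition: all `D_i` (`|i| ≤ ⌊r⌋`) are bounded and
`C_{f,r}(h) = sup_{x ∈ O, y ∈ ϖ^h O} |ε_{f,⌊r⌋}(x,y)| q^{rh} → 0` as `h → ∞`. -/
def IsCrWith (St : Setting S O E) (r : ℝ) (f : O → E) (D : (S → ℕ) → O → E) : Prop :=
  (∀ i ∈ Idx S ⌊r⌋₊, ∃ C : ℝ, ∀ x : O, ‖D i x‖ ≤ C) ∧
  ∀ ε : ℝ, 0 < ε → ∃ M : ℕ, ∀ h : ℕ, M ≤ h → ∀ x z : O,
    ‖epsTay St ⌊r⌋₊ f D x (St.ϖ ^ h * z)‖ * St.q ^ (r * (h : ℝ)) ≤ ε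

/-- `f` is of class `C^r`. -/
def IsCr (St : Setting S O E) (r : ℝ) (f : O → E) : Prop :=
  ∃ D, IsCrWith St r f D

/-- The `C^r`-norm of `f` (relative to the — unique — family `D`):
`max( sup_{i,x} |D_i f(x)/i!| , sup_{x,y} |ε_{f,⌊r⌋}(x,y)|/|y|^r )`. -/
def CrNorm (St : Setting S O E) (r : ℝ) (f : O → E) (D : (S → ℕ) → O → E) : ℝ :=
  max (⨆ i : (Idx S ⌊r⌋₊), ⨆ x : O, ‖D i.1 x / (mfact i.1 : E)‖)
      (⨆ x : O, ⨆ y : O, ‖epsTay St ⌊r⌋₊ f D x y‖ / St.ν y ^ r)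

/-- A compatible system of representatives `A_h` of `O/ϖ^h O` with `A_0 = {0}` and
`A_h ⊆ A_{h+1}`. -/
structure RepSystem (St : Setting S O E) where
  A : ℕ → Finset O
  hA0 : A 0 = {0}
  hmono : ∀ h : ℕ, A h ⊆ A (h + 1)
  hrep : ∀ (h : ℕ) (z : O), ∃! a : O, a ∈ A h ∧ ∃ y : O, z = a + St.ϖ ^ h * y

/-- `A = ⋃_h A_h`. -/
def Aall (St : Setting S O E) (R : RepSystem St) : Set O := ⋃ h : ℕ, (R.A h : Set O)

/-- `l(a)`: the smallest `n` with `a ∈ A_n`. -/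
def lA (St : Setting S O E) (R : RepSystem St) (a : O) : ℕ := sInf {n : ℕ | a ∈ R.A n}

/-- The function `z ↦ 1_{a+ϖ^n O}(z) ((z−a)/ϖ^n)^i` : it takes the value `y^i` at
`z = a + ϖ^n y` and `0` outside the coset `a + ϖ^n O`. -/
def coeval (St : Setting S O E) (a : O) (n : ℕ) (i : S → ℕ) : O → E := fun z =>
  if hz : ∃ y : O, z = a + St.ϖ ^ n * y then mpow St hz.choose i else 0

/-- The function `e_{a,i,r}(z) = ρ(ϖ)^{[l(a)r]} 1_{a+ϖ^{l(a)}O}(z) ((z−a)/ϖ^{l(a)})^i`. -/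
def ebasis (St : Setting S O E) (R : RepSystem St) (ρ : O →+* E) (r : ℝ) (a : O)
    (i : S → ℕ) : O → E := fun z =>
  ρ St.ϖ ^ ⌊(lA St R a : ℝ) * r⌋₊ * coeval St a (lA St R a) i z

/-- `J' = J ∪ {σ ∈ S∖J : d_σ + 1 > r}`. -/
def Jp (J : Set S) (d : S → ℕ) (r : ℝ) : Set S := J ∪ {s | r < (d s : ℝ) + 1}

/-- The `c₀` condition: `b` vanishes at infinity. -/
def c0Fun {ι : Type*} (b : ι → E) : Prop := ∀ ε : ℝ, 0 < ε → {x : ι | ε ≤ ‖b x‖}.Finite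

/-!
The functions `z ↦ z^i` are distinct characters of the multiplicative monoid of `O`, hence
linearly independent, so the coefficients of a polynomial of bounded degree are bounded by its
supremum norm. This applies to the Taylor remainders `R_j` of the derivatives `D_j f / j!`,
because `∑_j R_j(x, y) z^j = ε_f(x, y + z) - ε_f(x + y, z)`.

Approximate `f` on each coset of `ϖ^n O` by its Taylor polynomial at the representative in `A_n`.
On the coset of a new representative `a ∈ A_{n+1}`, with `a'` its representative in `A_n`, the
approximations of level `n + 1` and `n` differ by `∑_j R_j(a', a - a') (z - a)^j`; the coordinates
of `f` along the `e_{a,j,r}` are read off these coefficients, and the sum telescopes. The bound on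
`R_j` makes the coordinates tend to `0` and controls them by the norm of `f`.

Conversely the Taylor remainder of `e_{a,i,r}` vanishes for `y ∈ ϖ^{l(a)} O` and is at most
`q |y|^r` elsewhere, so sums with coefficients in `c₀` are of class `C^r`. Derivatives being unique,
such a sum determines its coefficients by induction on the level, on evaluating `D_i` at `a`.
-/

section Monomials

omit [DecidableEq S] [IsDomain O] [CompleteSpace E] [CharZero E]

/-! ### Multi-indices and monomials -/

lemma wt_mono : Monotone (wt : (S → ℕ) → ℕ) := fun _ _ h => Finset.sum_le_sum fun s _ => h s

lemma mfact_ne_zero [CharZero E] (i : S → ℕ) : (mfact i : E) ≠ 0 :=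
  Nat.cast_ne_zero.2 (Finset.prod_ne_zero_iff.2 fun s _ => (i s).factorial_ne_zero)

/-- The binomial coefficient `∏_σ (i_σ choose j_σ)` of two multi-indices. -/
def mchoose (i j : S → ℕ) : ℕ := ∏ s, (i s).choose (j s)

lemma mchoose_eq_zero {i j : S → ℕ} (h : ¬ j ≤ i) : mchoose i j = 0 := by
  obtain ⟨s, hs⟩ := not_forall.1 h
  exact Finset.prod_eq_zero (Finset.mem_univ s) (Nat.choose_eq_zero_of_lt (not_le.1 hs))

lemma mchoose_ne_zero {i j : S → ℕ} (h : j ≤ i) : mchoose i j ≠ 0 :=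
  Finset.prod_ne_zero_iff.2 fun s _ => (Nat.choose_pos (h s)).ne'

@[simp]
lemma mchoose_self (i : S → ℕ) : mchoose i i = 1 := by simp [mchoose]

namespace Setting

lemma one_lt_q (St : Setting S O E) : 1 < St.q :=
  St.hq ▸ one_lt_pow₀ (mod_cast St.hp.one_lt) St.hfdeg.ne'

lemma q_pos (St : Setting S O E) : 0 < St.q := one_pos.trans St.one_lt_q

lemma isUltrametricDist (St : Setting S O E) : IsUltrametricDist E :=
  .isUltrametricDist_of_forall_norm_add_le_max_norm St.norm_add_max

lemma norm_sub_le_max (St : Setting S O E) (x y : E) : ‖x - y‖ ≤ max ‖x‖ ‖y‖ := by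
  simpa only [sub_eq_add_neg, norm_neg] using St.norm_add_max x (-y)

lemma norm_natCast_le_one (St : Setting S O E) (n : ℕ) : ‖(n : E)‖ ≤ 1 :=
  have := St.isUltrametricDist
  IsUltrametricDist.norm_natCast_le_one E n

lemma q_inv_pow_rpow (St : Setting S O E) (n : ℕ) (r : ℝ) :
    (St.q⁻¹ ^ n) ^ r = (St.q ^ (r * n))⁻¹ := by
  rw [inv_pow, Real.inv_rpow (pow_nonneg St.q_pos.le n), ← Real.rpow_natCast,
    ← Real.rpow_mul St.q_pos.le, mul_comm]

end Setting

lemma mpow_mul (St : Setting S O E) (x y : O) (i : S → ℕ) :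
    mpow St (x * y) i = mpow St x i * mpow St y i := by
  simp [mpow, mul_pow, Finset.prod_mul_distrib]

@[simp]
lemma mpow_zero_right (St : Setting S O E) (z : O) : mpow St z 0 = 1 := by simp [mpow]

lemma mpow_zero_left (St : Setting S O E) {i : S → ℕ} (hi : i ≠ 0) : mpow St 0 i = 0 := by
  obtain ⟨s, hs⟩ := Function.ne_iff.1 hi
  exact Finset.prod_eq_zero (Finset.mem_univ s) (by rw [map_zero, zero_pow hs])

lemma mpow_sub_mul (St : Setting S O E) (z : O) {i j : S → ℕ} (h : j ≤ i) :
    mpow St z (i - j) * mpow St z j = mpow St z i := by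
  simp only [mpow, ← Finset.prod_mul_distrib, ← pow_add, Pi.sub_apply, Nat.sub_add_cancel (h _)]

lemma norm_mpow (St : Setting S O E) (z : O) (i : S → ℕ) : ‖mpow St z i‖ = St.ν z ^ wt i := by
  simp only [mpow, wt, norm_prod, norm_pow, St.norm_emb, Finset.prod_pow_eq_pow_sum]

lemma norm_mpow_le_one (St : Setting S O E) (z : O) (i : S → ℕ) : ‖mpow St z i‖ ≤ 1 := by
  simp only [mpow, norm_prod, norm_pow]
  exact Finset.prod_le_one (fun _ _ => by positivity)
    fun s _ => pow_le_one₀ (norm_nonneg _) (St.norm_le_one s z)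

lemma norm_mpow_uniformizer_pow (St : Setting S O E) (n : ℕ) (i : S → ℕ) :
    ‖mpow St (St.ϖ ^ n) i‖ = (St.q⁻¹ ^ n) ^ wt i := by
  simp only [mpow, wt, norm_prod, map_pow, norm_pow, St.norm_emb, St.ν_ϖ,
    Finset.prod_pow_eq_pow_sum]

lemma mpow_uniformizer_pow_ne_zero (St : Setting S O E) (n : ℕ) (i : S → ℕ) :
    mpow St (St.ϖ ^ n) i ≠ 0 := by
  have := St.q_pos
  rw [← norm_pos_iff, norm_mpow_uniformizer_pow]
  positivity

/-- The monomial `z ↦ z^i` as a character of the multiplicative monoid of `O`, the form in which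
Dedekind's theorem on the independence of characters applies to it. -/
def monomialHom (St : Setting S O E) (i : S → ℕ) : O →* E where
  toFun z := mpow St z i
  map_one' := by simp [mpow]
  map_mul' x y := mpow_mul St x y i

lemma eval_zero_derivative_prod_one_add_pow (a : S → E) (i : S → ℕ) :
    (∏ s, (1 + Polynomial.C (a s) * Polynomial.X) ^ i s).derivative.eval 0 =
      ∑ s, (i s : E) * a s := by
  simp [Polynomial.derivative_prod_finset, Polynomial.eval_finsetSum, Polynomial.eval_prod,
    Polynomial.derivative_pow]

/-- Comparing the linear terms of `n ↦ (1 + w n)^i` reduces this to the independence of the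
embeddings. -/
lemma monomialHom_injective [CharZero E] (St : Setting S O E) :
    Function.Injective (monomialHom St) := by
  intro i j hij
  have linear_terms (w : O) : ∑ s, (i s : E) * St.emb s w = ∑ s, (j s : E) * St.emb s w := by
    rw [← eval_zero_derivative_prod_one_add_pow, ← eval_zero_derivative_prod_one_add_pow]
    congr 2
    refine Polynomial.eq_of_infinite_eval_eq _ _
      ((Set.infinite_range_of_injective Nat.cast_injective).mono ?_)
    rintro _ ⟨n, rfl⟩
    simpa [monomialHom, mpow, Polynomial.eval_prod] using DFunLike.congr_fun hij (1 + w * n)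
  have independent : LinearIndependent E fun s => ((St.emb s : O →* E) : O → E) :=
    (linearIndependent_monoidHom O E).comp (fun s => (St.emb s : O →* E)) fun s t hst =>
      St.emb_distinct (RingHom.ext fun z => DFunLike.congr_fun hst z)
  have sub_eq_zero' := Fintype.linearIndependent_iff.1 independent (fun s => (i s : E) - j s) <| by
    funext w
    simpa [sub_mul, Finset.sum_sub_distrib, sub_eq_zero] using linear_terms w
  exact funext fun s => Nat.cast_injective (sub_eq_zero.1 (sub_eq_zero' s))

lemma linearIndependent_mpow [CharZero E] (St : Setting S O E) :
    LinearIndependent E fun (i : S → ℕ) (z : O) => mpow St z i :=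
  (linearIndependent_monoidHom O E).comp _ (monomialHom_injective St)

lemma exists_norm_coeff_le_of_linearIndependent {ι X K : Type*} [Fintype ι] [NormedField K]
    {g : ι → X → K} (hg : LinearIndependent K g) :
    ∃ c : ℝ, 0 ≤ c ∧ ∀ (P : ι → K) (B : ℝ), (∀ x, ‖∑ k, P k * g k x‖ ≤ B) →
      ∀ i, ‖P i‖ ≤ c * B := by
  have evaluations_span (i : ι) : ∃ l : X →₀ K, (l.sum fun x a => a • fun k => g k x) =
      Pi.single i 1 :=
    Finsupp.mem_span_range_iff_exists_finsupp.1
      ((span_flip_eq_top_iff_linearIndependent.2 hg) ▸ Submodule.mem_top)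
  choose l hl using evaluations_span
  have coeff_eq (P : ι → K) (i : ι) : P i = ∑ x ∈ (l i).support, l i x * ∑ k, P k * g k x := by
    rw [← dotProduct_single_one P i, ← hl i, Finsupp.sum, dotProduct_sum]
    exact Finset.sum_congr rfl fun x _ => by rw [dotProduct_smul, smul_eq_mul]; rfl
  refine ⟨∑ i, ∑ x ∈ (l i).support, ‖l i x‖, by positivity, fun P B hB i => ?_⟩
  obtain ⟨x₀, -⟩ := Function.ne_iff.1 (hg.ne_zero i)
  have hB_nonneg : 0 ≤ B := (norm_nonneg _).trans (hB x₀)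
  calc ‖P i‖ ≤ ∑ x ∈ (l i).support, ‖l i x‖ * B := by
        rw [coeff_eq P i]
        refine norm_sum_le_of_le _ fun x _ => ?_
        rw [norm_mul]
        exact mul_le_mul_of_nonneg_left (hB x) (norm_nonneg _)
    _ = (∑ x ∈ (l i).support, ‖l i x‖) * B := (Finset.sum_mul ..).symm
    _ ≤ _ := mul_le_mul_of_nonneg_right
        (Finset.single_le_sum (f := fun i => ∑ x ∈ (l i).support, ‖l i x‖)
          (fun _ _ => by positivity) (Finset.mem_univ i)) hB_nonneg

/-! ### The functions `e_{a,i,r}` and their derivatives -/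

/-- The coefficient `D_i(x) / i!` of `y^i` in the Taylor polynomial of a family of derivatives `D`
at `x`. -/
def taylorCoeff (D : (S → ℕ) → O → E) (i : S → ℕ) (x : O) : E := D i x / (mfact i : E)

omit [CommRing O] in
lemma taylorCoeff_eq_zero_iff [CharZero E] {D : (S → ℕ) → O → E} {i : S → ℕ} {x : O} :
    taylorCoeff D i x = 0 ↔ D i x = 0 :=
  div_eq_zero_iff.trans (or_iff_left (mfact_ne_zero i))

lemma norm_le_norm_taylorCoeff [CharZero E] (St : Setting S O E) (D : (S → ℕ) → O → E)
    (i : S → ℕ) (x : O) : ‖D i x‖ ≤ ‖taylorCoeff D i x‖ := by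
  rw [← div_mul_cancel₀ (D i x) (mfact_ne_zero i), norm_mul]
  exact mul_le_of_le_one_right (norm_nonneg _) (St.norm_natCast_le_one _)

lemma coeval_add_mul (St : Setting S O E) (a : O) (n : ℕ) (i : S → ℕ) (y : O) :
    coeval St a n i (a + St.ϖ ^ n * y) = mpow St y i := by
  have hz : ∃ y' : O, a + St.ϖ ^ n * y = a + St.ϖ ^ n * y' := ⟨y, rfl⟩
  rw [coeval, dif_pos hz]
  refine mul_left_cancel₀ (mpow_uniformizer_pow_ne_zero St n i) ?_
  rw [← mpow_mul, ← mpow_mul, ← add_left_cancel hz.choose_spec]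

lemma coeval_of_notMem (St : Setting S O E) {a : O} {n : ℕ} (i : S → ℕ) {z : O}
    (hz : ¬ ∃ y : O, z = a + St.ϖ ^ n * y) : coeval St a n i z = 0 :=
  dif_neg hz

lemma norm_coeval_le_one (St : Setting S O E) (a : O) (n : ℕ) (i : S → ℕ) (z : O) :
    ‖coeval St a n i z‖ ≤ 1 := by
  by_cases hz : ∃ y : O, z = a + St.ϖ ^ n * y
  · obtain ⟨y, rfl⟩ := hz
    exact coeval_add_mul St a n i y ▸ norm_mpow_le_one St y i
  · simp [coeval_of_notMem St i hz]

variable {St : Setting S O E} {ρ : O →+* E}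

lemma nu_nonneg (hρ : ∀ z, ‖ρ z‖ = St.ν z) (z : O) : 0 ≤ St.ν z := hρ z ▸ norm_nonneg _

lemma norm_rho_uniformizer_pow (hρ : ∀ z, ‖ρ z‖ = St.ν z) (m : ℕ) :
    ‖ρ St.ϖ ^ m‖ = St.q ^ (-(m : ℝ)) := by
  rw [norm_pow, hρ, St.ν_ϖ, Real.rpow_neg St.q_pos.le, Real.rpow_natCast, inv_pow]

lemma rho_uniformizer_pow_ne_zero (hρ : ∀ z, ‖ρ z‖ = St.ν z) (m : ℕ) : ρ St.ϖ ^ m ≠ 0 := by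
  rw [← norm_pos_iff, norm_rho_uniformizer_pow hρ]
  exact Real.rpow_pos_of_pos St.q_pos _

lemma norm_rho_uniformizer_pow_floor_le (hρ : ∀ z, ‖ρ z‖ = St.ν z) (t : ℝ) :
    ‖ρ St.ϖ ^ ⌊t⌋₊‖ ≤ St.q * St.q ^ (-t) :=
  calc ‖ρ St.ϖ ^ ⌊t⌋₊‖ = St.q ^ (-(⌊t⌋₊ : ℝ)) := norm_rho_uniformizer_pow hρ _
    _ ≤ St.q ^ (1 + -t) := Real.rpow_le_rpow_of_exponent_le St.one_lt_q.le
        (by linarith [Nat.lt_floor_add_one t])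
    _ = St.q * St.q ^ (-t) := by rw [Real.rpow_add St.q_pos, Real.rpow_one]

lemma le_norm_rho_uniformizer_pow_floor (hρ : ∀ z, ‖ρ z‖ = St.ν z) {t : ℝ} (ht : 0 ≤ t) :
    St.q ^ (-t) ≤ ‖ρ St.ϖ ^ ⌊t⌋₊‖ := by
  rw [norm_rho_uniformizer_pow hρ]
  exact Real.rpow_le_rpow_of_exponent_le St.one_lt_q.le (neg_le_neg (Nat.floor_le ht))

variable {R : RepSystem St} {r : ℝ}

lemma ebasis_add_mul (a : O) (i : S → ℕ) (y : O) :
    ebasis St R ρ r a i (a + St.ϖ ^ lA St R a * y) =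
      ρ St.ϖ ^ ⌊(lA St R a : ℝ) * r⌋₊ * mpow St y i := by
  rw [ebasis, coeval_add_mul]

lemma ebasis_of_notMem {a z : O} (i : S → ℕ) (hz : ¬ ∃ y, z = a + St.ϖ ^ lA St R a * y) :
    ebasis St R ρ r a i z = 0 := by
  rw [ebasis, coeval_of_notMem St i hz, mul_zero]

lemma norm_ebasis_le (hρ : ∀ z, ‖ρ z‖ = St.ν z) (a : O) (i : S → ℕ) (z : O) :
    ‖ebasis St R ρ r a i z‖ ≤ St.q * St.q ^ (-((lA St R a : ℝ) * r)) := by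
  rw [ebasis, norm_mul]
  exact (mul_le_of_le_one_right (norm_nonneg _) (norm_coeval_le_one St _ _ _ _)).trans
    (norm_rho_uniformizer_pow_floor_le hρ _)

/-- The derivative `D_j e_{a,i,r}`; it is `0` unless `j ≤ i`, since `mchoose i j` is. -/
def ebasisDeriv (St : Setting S O E) (R : RepSystem St) (ρ : O →+* E) (r : ℝ) (a : O)
    (i j : S → ℕ) (z : O) : E :=
  mfact j * (mchoose i j * (ebasis St R ρ r a (i - j) z / mpow St (St.ϖ ^ lA St R a) j))

lemma taylorCoeff_ebasisDeriv [CharZero E] (a : O) (i j : S → ℕ) (z : O) :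
    taylorCoeff (ebasisDeriv St R ρ r a i) j z =
      mchoose i j * (ebasis St R ρ r a (i - j) z / mpow St (St.ϖ ^ lA St R a) j) :=
  mul_div_cancel_left₀ _ (mfact_ne_zero j)

/-- The bound is stated before simplification because multiplying it by `‖y^j‖` yields
`norm_epsTay_ebasis_le`. -/
lemma norm_taylorCoeff_ebasisDeriv_le' [CharZero E] (hρ : ∀ z, ‖ρ z‖ = St.ν z) (a : O)
    (i j : S → ℕ) (z : O) : ‖taylorCoeff (ebasisDeriv St R ρ r a i) j z‖ ≤
      St.q * (St.q ^ (-((lA St R a : ℝ) * r)) * (St.q ^ lA St R a) ^ wt j) := by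
  rw [taylorCoeff_ebasisDeriv, norm_mul, norm_div, norm_mpow_uniformizer_pow, inv_pow, inv_pow,
    div_inv_eq_mul, ← mul_assoc St.q]
  have := St.q_pos
  exact (mul_le_of_le_one_left (by positivity) (St.norm_natCast_le_one _)).trans
    (mul_le_mul_of_nonneg_right (norm_ebasis_le hρ a (i - j) z) (by positivity))

lemma rpow_neg_mul_pow_le_rpow {q v : ℝ} (hq : 0 < q) {n m : ℕ} (hm : (m : ℝ) ≤ r)
    (hv : 1 ≤ q ^ n * v) : q ^ (-((n : ℝ) * r)) * (q ^ n * v) ^ m ≤ v ^ r := by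
  have hv_pos : 0 < v := pos_of_mul_pos_right (one_pos.trans_le hv) (by positivity)
  calc q ^ (-((n : ℝ) * r)) * (q ^ n * v) ^ m
      ≤ q ^ (-((n : ℝ) * r)) * (q ^ n * v) ^ r := by
        gcongr
        rw [← Real.rpow_natCast]
        exact Real.rpow_le_rpow_of_exponent_le hv hm
    _ = v ^ r := by
        rw [Real.mul_rpow (by positivity) hv_pos.le, ← Real.rpow_natCast, ← Real.rpow_mul hq.le,
          ← mul_assoc, ← Real.rpow_add hq, neg_add_cancel, Real.rpow_zero, one_mul]

lemma norm_taylorCoeff_ebasisDeriv_le [CharZero E] (hρ : ∀ z, ‖ρ z‖ = St.ν z) (a : O)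
    (i : S → ℕ) {j : S → ℕ} (hj : (wt j : ℝ) ≤ r) (z : O) :
    ‖taylorCoeff (ebasisDeriv St R ρ r a i) j z‖ ≤ St.q := by
  refine (norm_taylorCoeff_ebasisDeriv_le' hρ a i j z).trans
    (mul_le_of_le_one_right St.q_pos.le ?_)
  simpa using rpow_neg_mul_pow_le_rpow St.q_pos hj (v := 1)
    (by simpa using one_le_pow₀ St.one_lt_q.le)

lemma ebasisDeriv_self_ne_zero [CharZero E] (hρ : ∀ z, ‖ρ z‖ = St.ν z) (a : O) (i : S → ℕ) :
    ebasisDeriv St R ρ r a i i a ≠ 0 := by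
  have h_ebasis := ebasis_add_mul (R := R) (ρ := ρ) (r := r) a 0 0
  rw [mul_zero, add_zero, mpow_zero_right, mul_one] at h_ebasis
  rw [ebasisDeriv, mchoose_self, Nat.cast_one, one_mul, tsub_self, h_ebasis]
  exact mul_ne_zero (mfact_ne_zero i)
    (div_ne_zero (rho_uniformizer_pow_ne_zero hρ _) (mpow_uniformizer_pow_ne_zero St _ i))

/-! ### Representatives -/

namespace RepSystem

variable {n : ℕ} {a a' z : O}

lemma A_mono (R : RepSystem St) : Monotone R.A := monotone_nat_of_le_succ R.hmono

lemma eq_of_mem_coset (ha : a ∈ R.A n) (ha' : a' ∈ R.A n) (h : ∃ y, a = a' + St.ϖ ^ n * y) :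
    a = a' :=
  (R.hrep n a).unique ⟨ha, 0, by simp⟩ ⟨ha', h⟩

lemma mem_Aall (ha : a ∈ R.A n) : a ∈ Aall St R := Set.mem_iUnion.2 ⟨n, ha⟩

lemma mem_A_lA (ha : a ∈ Aall St R) : a ∈ R.A (lA St R a) :=
  Nat.sInf_mem (s := {n | a ∈ R.A n}) (Set.mem_iUnion.1 ha)

lemma lA_le (ha : a ∈ R.A n) : lA St R a ≤ n := Nat.sInf_le (s := {n | a ∈ R.A n}) ha

lemma mem_A_iff_lA_le (ha : a ∈ Aall St R) : a ∈ R.A n ↔ lA St R a ≤ n :=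
  ⟨lA_le, fun h => R.A_mono h (mem_A_lA ha)⟩

lemma zero_mem_A_zero (R : RepSystem St) : 0 ∈ R.A 0 := by simp [R.hA0]

lemma lA_zero (R : RepSystem St) : lA St R 0 = 0 := Nat.le_zero.1 (lA_le R.zero_mem_A_zero)

lemma lA_eq_of_mem_sdiff (ha : a ∈ R.A (n + 1) \ R.A n) : lA St R a = n + 1 := by
  rw [Finset.mem_sdiff] at ha
  refine le_antisymm (lA_le ha.1) (Nat.lt_of_not_le fun h => ha.2 ?_)
  exact (mem_A_iff_lA_le (mem_Aall ha.1)).2 h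

/-- The element of `A_n` congruent to `z` modulo `ϖ^n`. -/
def rep (R : RepSystem St) (n : ℕ) (z : O) : O := (R.hrep n z).choose

lemma rep_mem (R : RepSystem St) (n : ℕ) (z : O) : R.rep n z ∈ R.A n :=
  (R.hrep n z).choose_spec.1.1

lemma exists_eq_rep_add (R : RepSystem St) (n : ℕ) (z : O) :
    ∃ y, z = R.rep n z + St.ϖ ^ n * y :=
  (R.hrep n z).choose_spec.1.2

lemma exists_sub_rep_eq (R : RepSystem St) (n : ℕ) (z : O) :
    ∃ y, z - R.rep n z = St.ϖ ^ n * y :=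
  (R.exists_eq_rep_add n z).imp fun _ => sub_eq_of_eq_add'

lemma eq_rep (ha : a ∈ R.A n) (h : ∃ y, z = a + St.ϖ ^ n * y) : a = R.rep n z :=
  (R.hrep n z).choose_spec.2 a ⟨ha, h⟩

lemma rep_zero (R : RepSystem St) (z : O) : R.rep 0 z = 0 :=
  (eq_rep R.zero_mem_A_zero ⟨z, by simp⟩).symm

lemma rep_rep_succ (R : RepSystem St) (n : ℕ) (z : O) :
    R.rep n (R.rep (n + 1) z) = R.rep n z := by
  obtain ⟨w, hw⟩ := R.exists_eq_rep_add (n + 1) z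
  obtain ⟨y, hy⟩ := R.exists_eq_rep_add n (R.rep (n + 1) z)
  exact eq_rep (R.rep_mem n _) ⟨y + St.ϖ * w, by linear_combination hw + hy⟩

end RepSystem

lemma ebasisDeriv_eq_zero_of_lA_le {a a' : O} {i i' : S → ℕ} (ha : a ∈ Aall St R)
    (ha' : a' ∈ Aall St R) (hl : lA St R a ≤ lA St R a') (hne : (a', i') ≠ (a, i)) :
    ebasisDeriv St R ρ r a' i' i a = 0 := by
  by_cases h_coset : ∃ y, a = a' + St.ϖ ^ lA St R a' * y
  · obtain rfl := RepSystem.eq_of_mem_coset ((RepSystem.mem_A_iff_lA_le ha).2 hl)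
      (RepSystem.mem_A_lA ha') h_coset
    by_cases hi : i ≤ i'
    · have h_ebasis := ebasis_add_mul (R := R) (ρ := ρ) (r := r) a (i' - i) 0
      rw [mpow_zero_left, mul_zero, mul_zero, add_zero] at h_ebasis
      · simp [ebasisDeriv, h_ebasis]
      · exact fun h => hne (by rw [(tsub_eq_zero_iff_le.1 h).antisymm hi])
    · simp [ebasisDeriv, mchoose_eq_zero hi]
  · simp [ebasisDeriv, ebasis_of_notMem _ h_coset]

/-! ### Families vanishing to order `r` -/

/-- `g x y = o(|y|^r)` as `y → 0`, uniformly in `x`. The second half of `IsCrWith` says this of the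
Taylor remainder. -/
def VanishesToOrder {X : Type*} (St : Setting S O E) (r : ℝ) (g : X → O → E) : Prop :=
  ∀ ε : ℝ, 0 < ε → ∃ M : ℕ, ∀ h : ℕ, M ≤ h → ∀ x z,
    ‖g x (St.ϖ ^ h * z)‖ * St.q ^ (r * (h : ℝ)) ≤ ε

namespace VanishesToOrder

variable {X : Type*} {g : X → O → E}

lemma exists_norm_le (hg : VanishesToOrder St r g) (hr : 0 ≤ r) {ε : ℝ} (hε : 0 < ε) :
    ∃ M : ℕ, ∀ h : ℕ, M ≤ h → ∀ x z, ‖g x (St.ϖ ^ h * z)‖ ≤ ε := by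
  obtain ⟨M, hM⟩ := hg ε hε
  exact ⟨M, fun h hh x z => (le_mul_of_one_le_right (norm_nonneg _)
    (Real.one_le_rpow St.one_lt_q.le (by positivity))).trans (hM h hh x z)⟩

lemma eq_zero_of_nu_eq_zero (hg : VanishesToOrder St r g) (hr : 0 ≤ r) (x : X) {y : O}
    (hy : St.ν y = 0) : g x y = 0 := by
  refine norm_le_zero_iff.1 (le_of_forall_gt_imp_ge_of_dense fun ε hε => ?_)
  obtain ⟨M, hM⟩ := hg.exists_norm_le hr hε
  obtain ⟨z, rfl⟩ := (St.mem_ball_iff y M).2 (hy ▸ pow_nonneg (inv_nonneg.2 St.q_pos.le) M)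
  exact hM M le_rfl x z

lemma exists_norm_mul_rpow_le (hg : VanishesToOrder St r g) (hr : 0 ≤ r)
    (hg_bdd : ∃ C, ∀ x y, ‖g x y‖ ≤ C) :
    ∃ K, ∀ (n : ℕ) x z, ‖g x (St.ϖ ^ n * z)‖ * St.q ^ (r * (n : ℝ)) ≤ K := by
  obtain ⟨C, hC⟩ := hg_bdd
  obtain ⟨M, hM⟩ := hg 1 one_pos
  refine ⟨max 1 (C * St.q ^ (r * (M : ℝ))), fun n x z => ?_⟩
  rcases le_total M n with hMn | hnM
  · exact le_max_of_le_left (hM n hMn x z)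
  · refine le_max_of_le_right (mul_le_mul (hC _ _) ?_ (Real.rpow_nonneg St.q_pos.le _)
      ((norm_nonneg _).trans (hC x 0)))
    exact Real.rpow_le_rpow_of_exponent_le St.one_lt_q.le
      (mul_le_mul_of_nonneg_left (Nat.cast_le.2 hnM) hr)

/-- On the shell `q^{-(n+1)} < |y| ≤ q^{-n}` the functions `|y|^r` and `q^{-rn}` agree up to the
factor `q^r`. -/
lemma exists_norm_div_rpow_le (hg : VanishesToOrder St r g) (hr : 0 ≤ r)
    (hν : ∀ z, 0 ≤ St.ν z) (hg_bdd : ∃ C, ∀ x y, ‖g x y‖ ≤ C) :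
    ∃ K, ∀ x y, ‖g x y‖ / St.ν y ^ r ≤ K := by
  obtain ⟨K, hK⟩ := hg.exists_norm_mul_rpow_le hr hg_bdd
  have := St.q_pos
  refine ⟨K * St.q ^ r, fun x y => ?_⟩
  have hK_nonneg : 0 ≤ K := (hK 0 x 0).trans' (by positivity)
  rcases (hν y).eq_or_lt with hy | hy
  · rw [hg.eq_zero_of_nu_eq_zero hr x hy.symm, norm_zero, zero_div]
    positivity
  have hy_le_one : St.ν y ≤ 1 := by simpa using (St.mem_ball_iff y 0).1 ⟨y, by simp⟩
  obtain ⟨n, h_lt, h_le⟩ := exists_nat_pow_near_of_lt_one hy hy_le_one (inv_pos.2 St.q_pos)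
    (inv_lt_one_of_one_lt₀ St.one_lt_q)
  obtain ⟨z, rfl⟩ := (St.mem_ball_iff y n).2 h_le
  have h_shell : (St.q ^ (r * ((n + 1 : ℕ) : ℝ)))⁻¹ ≤ St.ν (St.ϖ ^ n * z) ^ r :=
    St.q_inv_pow_rpow (n + 1) r ▸ Real.rpow_le_rpow (by positivity) h_lt.le hr
  rw [div_le_iff₀ (Real.rpow_pos_of_pos hy r)]
  calc ‖g x (St.ϖ ^ n * z)‖ ≤ K * (St.q ^ (r * (n : ℝ)))⁻¹ := by
        rw [← div_eq_mul_inv, le_div_iff₀ (by positivity)]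
        exact hK n x z
    _ = K * St.q ^ r * (St.q ^ (r * ((n + 1 : ℕ) : ℝ)))⁻¹ := by
        rw [Nat.cast_succ, mul_add_one, Real.rpow_add St.q_pos]
        field_simp
    _ ≤ K * St.q ^ r * St.ν (St.ϖ ^ n * z) ^ r :=
        mul_le_mul_of_nonneg_left h_shell (by positivity)

end VanishesToOrder

end Monomials
section Differentiability

omit [IsDomain O] [CompleteSpace E] [CharZero E]

/-! ### Taylor polynomials -/

lemma mem_Idx {N : ℕ} {i : S → ℕ} : i ∈ Idx S N ↔ wt i ≤ N := by
  simp only [Idx, Finset.mem_filter, Fintype.mem_piFinset, Finset.mem_range, and_iff_right_iff_imp]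
  exact fun hi s => Nat.lt_succ_of_le
    ((Finset.single_le_sum (fun _ _ => Nat.zero_le _) (Finset.mem_univ s)).trans hi)

lemma zero_mem_Idx {N : ℕ} : (0 : S → ℕ) ∈ Idx S N := mem_Idx.2 (by simp [wt])

lemma mem_Idx_of_le {N : ℕ} {i j : S → ℕ} (hji : j ≤ i) (hi : i ∈ Idx S N) : j ∈ Idx S N :=
  mem_Idx.2 ((wt_mono hji).trans (mem_Idx.1 hi))

lemma wt_le_of_mem_Idx_floor {r : ℝ} (hr : 0 ≤ r) {i : S → ℕ} (hi : i ∈ Idx S ⌊r⌋₊) :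
    (wt i : ℝ) ≤ r :=
  (Nat.le_floor_iff hr).1 (mem_Idx.1 hi)

lemma add_pow_eq_sum_range {R : Type*} [CommSemiring R] (a b : R) {n N : ℕ} (h : n ≤ N) :
    (a + b) ^ n = ∑ m ∈ Finset.range (N + 1), (n.choose m : R) * a ^ (n - m) * b ^ m := by
  rw [add_comm, add_pow, ← Finset.sum_subset (Finset.range_subset_range.2 (Nat.succ_le_succ h))]
  · exact Finset.sum_congr rfl fun m _ => by ring
  · intro m _ hm
    rw [Nat.choose_eq_zero_of_lt (by simpa using hm), Nat.cast_zero, zero_mul, zero_mul]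

lemma mpow_add (St : Setting S O E) {N : ℕ} (y z : O) {i : S → ℕ} (hi : i ∈ Idx S N) :
    mpow St (y + z) i = ∑ j ∈ Idx S N, (mchoose i j : E) * mpow St y (i - j) * mpow St z j := by
  have h_le (s : S) : i s ≤ N :=
    (Finset.single_le_sum (fun _ _ => Nat.zero_le _) (Finset.mem_univ s)).trans (mem_Idx.1 hi)
  simp only [mpow, map_add, add_pow_eq_sum_range _ _ (h_le _)]
  rw [Finset.prod_univ_sum, Idx, Finset.sum_filter_of_ne]
  · simp [mchoose, Finset.prod_mul_distrib]
  · intro j _ hne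
    contrapose! hne
    have hji : ¬ j ≤ i := fun hji => hne.not_ge ((wt_mono hji).trans (mem_Idx.1 hi))
    simp [mchoose_eq_zero hji]

lemma exists_norm_coeff_mul_le [CharZero E] (St : Setting S O E) (N : ℕ) :
    ∃ c : ℝ, 0 ≤ c ∧ ∀ (t : O) (P : (S → ℕ) → E) (B : ℝ),
      (∀ z, ‖∑ i ∈ Idx S N, P i * mpow St (t * z) i‖ ≤ B) →
      ∀ i ∈ Idx S N, ‖P i‖ * ‖mpow St t i‖ ≤ c * B := by
  obtain ⟨c, hc, h_coeff⟩ := exists_norm_coeff_le_of_linearIndependent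
    ((linearIndependent_mpow St).comp ((↑) : Idx S N → S → ℕ) Subtype.val_injective)
  refine ⟨c, hc, fun t P B hB i hi => ?_⟩
  rw [← norm_mul]
  refine h_coeff (fun k => P k * mpow St t k) B (fun z => ?_) ⟨i, hi⟩
  have h_sum := Finset.sum_coe_sort (Idx S N) fun k => P k * mpow St (t * z) k
  simp only [mpow_mul, ← mul_assoc] at h_sum hB
  exact (congrArg norm h_sum).trans_le (hB z)

variable {St : Setting S O E} {ρ : O →+* E} {R : RepSystem St} {r : ℝ} {N : ℕ} {f : O → E}
  {D : (S → ℕ) → O → E}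

lemma VanishesToOrder.coeff_eq_zero [CharZero E] {X : Type*} {P : (S → ℕ) → X → E}
    (hP : VanishesToOrder St r fun x y => ∑ i ∈ Idx S N, P i x * mpow St y i) {i : S → ℕ}
    (hi : i ∈ Idx S N) (hir : (wt i : ℝ) ≤ r) (x : X) : P i x = 0 := by
  obtain ⟨c, hc, h_coeff⟩ := exists_norm_coeff_mul_le St N
  have := St.q_pos
  have norm_le (ε : ℝ) (hε : 0 < ε) : ‖P i x‖ ≤ c * ε := by
    obtain ⟨h, hh⟩ := hP ε hε
    have h_scaled : ‖P i x‖ * (St.q⁻¹ ^ h) ^ wt i ≤ c * (ε * (St.q⁻¹ ^ h) ^ r) := by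
      rw [← norm_mpow_uniformizer_pow]
      refine h_coeff _ (fun k => P k x) _ (fun z => ?_) i hi
      rw [St.q_inv_pow_rpow, ← div_eq_mul_inv, le_div_iff₀ (by positivity)]
      exact hh h le_rfl x z
    have h_pow : (St.q⁻¹ ^ h) ^ r ≤ (St.q⁻¹ ^ h) ^ wt i := by
      rw [← Real.rpow_natCast _ (wt i)]
      exact Real.rpow_le_rpow_of_exponent_ge (by positivity)
        (pow_le_one₀ (by positivity) (inv_le_one_of_one_le₀ St.one_lt_q.le)) hir
    refine le_of_mul_le_mul_right (h_scaled.trans ?_)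
      (show 0 < (St.q⁻¹ ^ h) ^ wt i by positivity)
    rw [← mul_assoc]
    exact mul_le_mul_of_nonneg_left h_pow (by positivity)
  refine norm_le_zero_iff.1 (le_of_forall_gt_imp_ge_of_dense fun δ hδ => ?_)
  calc ‖P i x‖ ≤ c * (δ / (c + 1)) := norm_le _ (by positivity)
    _ = c / (c + 1) * δ := by ring
    _ ≤ δ := mul_le_of_le_one_left hδ.le ((div_le_one (by positivity)).2 (by linarith))

lemma epsTay_eq (f : O → E) (D : (S → ℕ) → O → E) (x y : O) :
    epsTay St N f D x y = f (x + y) - ∑ i ∈ Idx S N, taylorCoeff D i x * mpow St y i := by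
  simp only [epsTay, taylorCoeff, div_mul_eq_mul_div]

/-- The Taylor remainder, divided by `j!`, of `D_j` with the derivatives `D_{j+k}` for
`|j| + |k| ≤ N`; the sum runs over `i = j + k`. -/
def taylorCoeffRemainder (St : Setting S O E) (N : ℕ) (D : (S → ℕ) → O → E) (j : S → ℕ)
    (x y : O) : E :=
  taylorCoeff D j (x + y) -
    ∑ i ∈ Idx S N, (mchoose i j : E) * taylorCoeff D i x * mpow St y (i - j)

lemma sum_taylorCoeffRemainder_mul_mpow (f : O → E) (D : (S → ℕ) → O → E) (x y z : O) :
    ∑ j ∈ Idx S N, taylorCoeffRemainder St N D j x y * mpow St z j =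
      epsTay St N f D x (y + z) - epsTay St N f D (x + y) z := by
  have h_expand : ∑ i ∈ Idx S N, taylorCoeff D i x * mpow St (y + z) i =
      ∑ j ∈ Idx S N, ∑ i ∈ Idx S N,
        (mchoose i j : E) * taylorCoeff D i x * mpow St y (i - j) * mpow St z j := by
    rw [Finset.sum_comm]
    refine Finset.sum_congr rfl fun i hi => ?_
    rw [mpow_add St y z hi, Finset.mul_sum]
    exact Finset.sum_congr rfl fun j _ => by ring
  simp only [epsTay_eq, taylorCoeffRemainder, sub_mul, Finset.sum_sub_distrib, Finset.sum_mul,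
    h_expand, add_assoc]
  ring

lemma exists_norm_taylorCoeffRemainder_mul_le [CharZero E] (St : Setting S O E) (N : ℕ) :
    ∃ c : ℝ, 0 ≤ c ∧ ∀ (f : O → E) (D : (S → ℕ) → O → E) (t : O) (B : ℝ),
      (∀ x z, ‖epsTay St N f D x (t * z)‖ ≤ B) → ∀ j ∈ Idx S N, ∀ x z,
        ‖taylorCoeffRemainder St N D j x (t * z)‖ * ‖mpow St t j‖ ≤ c * B := by
  obtain ⟨c, hc, h_coeff⟩ := exists_norm_coeff_mul_le St N
  refine ⟨c, hc, fun f D t B hB j hj x z => ?_⟩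
  refine h_coeff t (fun j => taylorCoeffRemainder St N D j x (t * z)) B (fun w => ?_) j hj
  rw [sum_taylorCoeffRemainder_mul_mpow f D, ← mul_add]
  exact (St.norm_sub_le_max _ _).trans (max_le (hB _ _) (hB _ _))

lemma IsCrWith.vanishesToOrder_taylorCoeffRemainder_mul [CharZero E] (hf : IsCrWith St r f D)
    {j : S → ℕ} (hj : j ∈ Idx S ⌊r⌋₊) :
    VanishesToOrder St r fun x y => taylorCoeffRemainder St ⌊r⌋₊ D j x y * mpow St y j := by
  obtain ⟨c, hc, h_remainder⟩ := exists_norm_taylorCoeffRemainder_mul_le St ⌊r⌋₊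
  intro ε hε
  obtain ⟨M, hM⟩ := hf.2 (ε / (c + 1)) (by positivity)
  refine ⟨M, fun h hh x z => ?_⟩
  have hq : 0 < St.q ^ (r * (h : ℝ)) := Real.rpow_pos_of_pos St.q_pos _
  have h_scaled := h_remainder f D (St.ϖ ^ h) (ε / (c + 1) / St.q ^ (r * (h : ℝ)))
    (fun x z => (le_div_iff₀ hq).2 (hM h hh x z)) j hj x z
  rw [← le_div_iff₀ hq]
  calc ‖taylorCoeffRemainder St ⌊r⌋₊ D j x (St.ϖ ^ h * z) * mpow St (St.ϖ ^ h * z) j‖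
      ≤ ‖taylorCoeffRemainder St ⌊r⌋₊ D j x (St.ϖ ^ h * z)‖ * ‖mpow St (St.ϖ ^ h) j‖ := by
        rw [norm_mul, mpow_mul, norm_mul]
        gcongr
        exact mul_le_of_le_one_right (norm_nonneg _) (norm_mpow_le_one St z j)
    _ ≤ c * (ε / (c + 1) / St.q ^ (r * (h : ℝ))) := h_scaled
    _ = c / (c + 1) * (ε / St.q ^ (r * (h : ℝ))) := by ring
    _ ≤ ε / St.q ^ (r * (h : ℝ)) :=
        mul_le_of_le_one_left (by positivity) ((div_le_one (by positivity)).2 (by linarith))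

/-- If `D_j f = 0`, the remainder of `D_j f` is a polynomial, whose coefficients are multiples of
the `D_i f` with `j ≤ i`. -/
lemma IsCrWith.deriv_eq_zero_of_le [CharZero E] (hf : IsCrWith St r f D) (hr : 0 ≤ r)
    {i j : S → ℕ} (hDj : D j = 0) (hji : j ≤ i) (hi : i ∈ Idx S ⌊r⌋₊) : D i = 0 := by
  have h_poly (x y : O) : taylorCoeffRemainder St ⌊r⌋₊ D j x y * mpow St y j =
      ∑ i ∈ Idx S ⌊r⌋₊, -((mchoose i j : E) * taylorCoeff D i x) * mpow St y i := by
    rw [taylorCoeffRemainder, taylorCoeff_eq_zero_iff.2 (congrFun hDj _), zero_sub, neg_mul,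
      Finset.sum_mul, ← Finset.sum_neg_distrib]
    refine Finset.sum_congr rfl fun k _ => ?_
    by_cases hjk : j ≤ k
    · rw [mul_assoc, mpow_sub_mul St y hjk, neg_mul]
    · simp [mchoose_eq_zero hjk]
  have h_vanishes := hf.vanishesToOrder_taylorCoeffRemainder_mul (mem_Idx_of_le hji hi)
  simp only [h_poly] at h_vanishes
  funext x
  have h_coeff := h_vanishes.coeff_eq_zero hi (wt_le_of_mem_Idx_floor hr hi) x
  rw [neg_eq_zero, mul_eq_zero, Nat.cast_eq_zero] at h_coeff
  exact taylorCoeff_eq_zero_iff.1 (h_coeff.resolve_left (mchoose_ne_zero hji))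

lemma IsCrWith.deriv_eq_zero [CharZero E] (h0 : IsCrWith St r (fun _ => 0) D) (hr : 0 ≤ r)
    {i : S → ℕ} (hi : i ∈ Idx S ⌊r⌋₊) (x : O) : D i x = 0 := by
  have h_vanishes : VanishesToOrder St r fun x y =>
      ∑ i ∈ Idx S ⌊r⌋₊, -taylorCoeff D i x * mpow St y i := by
    refine Eq.mp (congrArg _ (funext₂ fun x y => ?_)) h0.2
    simp [epsTay_eq]
  exact taylorCoeff_eq_zero_iff.1
    (neg_eq_zero.1 (h_vanishes.coeff_eq_zero hi (wt_le_of_mem_Idx_floor hr hi) x))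

lemma epsTay_ebasis_eq_zero [CharZero E] (a : O) {i : S → ℕ} (hi : i ∈ Idx S N) (x w : O) :
    epsTay St N (ebasis St R ρ r a i) (ebasisDeriv St R ρ r a i) x
      (St.ϖ ^ lA St R a * w) = 0 := by
  rw [epsTay_eq, sub_eq_zero]
  by_cases hx : ∃ v, x = a + St.ϖ ^ lA St R a * v
  · obtain ⟨v, rfl⟩ := hx
    rw [add_assoc, ← mul_add, ebasis_add_mul, mpow_add St v w hi, Finset.mul_sum]
    refine Finset.sum_congr rfl fun j _ => ?_
    rw [taylorCoeff_ebasisDeriv, ebasis_add_mul, mpow_mul]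
    field_simp [mpow_uniformizer_pow_ne_zero St (lA St R a) j]
  · have hxw : ¬ ∃ v, x + St.ϖ ^ lA St R a * w = a + St.ϖ ^ lA St R a * v :=
      fun ⟨v, hv⟩ => hx ⟨v - w, by linear_combination hv⟩
    simp [taylorCoeff_ebasisDeriv, ebasis_of_notMem _ hx, ebasis_of_notMem i hxw]

lemma norm_epsTay_ebasis_le [CharZero E] (hρ : ∀ z, ‖ρ z‖ = St.ν z) (hr : 0 ≤ r) (a : O)
    {i : S → ℕ} (hi : i ∈ Idx S ⌊r⌋₊) (x y : O) :
    ‖epsTay St ⌊r⌋₊ (ebasis St R ρ r a i) (ebasisDeriv St R ρ r a i) x y‖ ≤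
      St.q * St.ν y ^ r := by
  have := St.isUltrametricDist
  have := St.q_pos
  have h_nonneg : 0 ≤ St.q * St.ν y ^ r :=
    mul_nonneg this.le (Real.rpow_nonneg (nu_nonneg hρ y) r)
  rcases le_or_gt (St.ν y) (St.q⁻¹ ^ lA St R a) with hy | hy
  · obtain ⟨w, rfl⟩ := (St.mem_ball_iff y _).2 hy
    rwa [epsTay_ebasis_eq_zero a hi, norm_zero]
  have hqy : 1 ≤ St.q ^ lA St R a * St.ν y := by
    rw [inv_pow, inv_lt_iff_one_lt_mul₀ (by positivity), mul_comm] at hy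
    exact hy.le
  rw [epsTay_eq]
  refine (St.norm_sub_le_max _ _).trans (max_le ?_
    (IsUltrametricDist.norm_sum_le_of_forall_le_of_nonneg h_nonneg fun j hj => ?_))
  · refine (norm_ebasis_le hρ a i _).trans (mul_le_mul_of_nonneg_left ?_ this.le)
    simpa using rpow_neg_mul_pow_le_rpow St.q_pos (m := 0) (by simpa using hr) hqy
  · calc ‖taylorCoeff (ebasisDeriv St R ρ r a i) j x * mpow St y j‖
        ≤ St.q * (St.q ^ (-((lA St R a : ℝ) * r)) * (St.q ^ lA St R a) ^ wt j) *
            St.ν y ^ wt j := by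
          rw [norm_mul, norm_mpow]
          exact mul_le_mul_of_nonneg_right (norm_taylorCoeff_ebasisDeriv_le' hρ a i j x)
            (pow_nonneg (nu_nonneg hρ y) _)
      _ = St.q * (St.q ^ (-((lA St R a : ℝ) * r)) * (St.q ^ lA St R a * St.ν y) ^ wt j) := by
          rw [mul_pow]
          ring
      _ ≤ St.q * St.ν y ^ r := mul_le_mul_of_nonneg_left
          (rpow_neg_mul_pow_le_rpow St.q_pos (wt_le_of_mem_Idx_floor hr hj) hqy) this.le

/-! ### Sums with coefficients vanishing at infinity -/

section VanishingAtInfinity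

variable {ι : Type*} {b b' : ι → E}

lemma c0Fun_iff_tendsto : c0Fun b ↔ Filter.Tendsto b Filter.cofinite (nhds 0) := by
  simp only [c0Fun, Metric.tendsto_nhds, dist_zero_right, Filter.eventually_cofinite, not_lt]

lemma c0Fun.sub (hb : c0Fun b) (hb' : c0Fun b') : c0Fun (b - b') := by
  rw [c0Fun_iff_tendsto] at *
  exact sub_zero (0 : E) ▸ hb.sub hb'

lemma c0Fun.bddAbove_norm (hb : c0Fun b) : BddAbove (Set.range fun x => ‖b x‖) :=
  (c0Fun_iff_tendsto.1 hb).norm.bddAbove_range_of_cofinite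

lemma c0Fun.summable_mul [CompleteSpace E] [IsUltrametricDist E] (hb : c0Fun b) {g : ι → E}
    {C : ℝ} (hg : ∀ x, ‖g x‖ ≤ C) : Summable fun x => b x * g x := by
  refine NonarchimedeanAddGroup.summable_of_tendsto_cofinite_zero ?_
  refine squeeze_zero_norm (fun x => (norm_mul _ _).trans_le
    (mul_le_mul_of_nonneg_left (hg x) (norm_nonneg _))) ?_
  simpa using (c0Fun_iff_tendsto.1 hb).norm.mul_const C

lemma c0Fun.norm_tsum_mul_le [IsUltrametricDist E] (hb : c0Fun b) {g : ι → E} {C : ℝ}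
    (hC : 0 ≤ C) (hg : ∀ x, ‖g x‖ ≤ C) : ‖∑' x, b x * g x‖ ≤ C * ⨆ x, ‖b x‖ := by
  refine IsUltrametricDist.norm_tsum_le_of_forall_le_of_nonneg
    (mul_nonneg hC (Real.iSup_nonneg fun _ => norm_nonneg _)) fun x => ?_
  rw [norm_mul, mul_comm]
  exact mul_le_mul (hg x) (le_ciSup hb.bddAbove_norm x) (norm_nonneg _) hC

end VanishingAtInfinity

/-- The index set `A × (Y ∩ I_{≤[r]})` of the basis. -/
abbrev BasisIndex (R : RepSystem St) (Y : Set (S → ℕ)) (r : ℝ) : Type _ :=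
  {x : O × (S → ℕ) // x.1 ∈ Aall St R ∧ x.2 ∈ Idx S ⌊r⌋₊ ∧ x.2 ∈ Y}

/-- The function `∑ b_{a,i} e_{a,i,r}`. -/
def basisSum (ρ : O →+* E) {Y : Set (S → ℕ)} (b : BasisIndex R Y r → E) (z : O) : E :=
  ∑' x, b x * ebasis St R ρ r x.1.1 x.1.2 z

/-- The termwise derivative `∑ b_{a,i} D_j e_{a,i,r}` of `basisSum`. -/
def basisSumDeriv (ρ : O →+* E) {Y : Set (S → ℕ)} (b : BasisIndex R Y r → E) (j : S → ℕ)
    (z : O) : E :=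
  ∑' x, b x * ebasisDeriv St R ρ r x.1.1 x.1.2 j z

variable {Y : Set (S → ℕ)} {b : BasisIndex R Y r → E}

lemma basisSumDeriv_eq_zero (hY : IsLowerSet Y) {j : S → ℕ} (hj : j ∉ Y) :
    basisSumDeriv ρ b j = 0 := by
  funext z
  refine (tsum_congr fun x => ?_).trans tsum_zero
  have hjx : ¬ j ≤ x.1.2 := fun h => hj (hY h x.2.2.2)
  simp [ebasisDeriv, mchoose_eq_zero hjx]

lemma taylorCoeff_basisSumDeriv (j : S → ℕ) (z : O) :
    taylorCoeff (basisSumDeriv ρ b) j z =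
      ∑' x, b x * taylorCoeff (ebasisDeriv St R ρ r x.1.1 x.1.2) j z := by
  simp only [taylorCoeff, basisSumDeriv, ← mul_div_assoc, tsum_div_const]

lemma norm_taylorCoeff_basisSumDeriv_le [CharZero E] (hρ : ∀ z, ‖ρ z‖ = St.ν z) (hr : 0 ≤ r)
    (hb : c0Fun b) {j : S → ℕ} (hj : j ∈ Idx S ⌊r⌋₊) (z : O) :
    ‖taylorCoeff (basisSumDeriv ρ b) j z‖ ≤ St.q * ⨆ x, ‖b x‖ := by
  have := St.isUltrametricDist
  rw [taylorCoeff_basisSumDeriv]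
  exact hb.norm_tsum_mul_le St.q_pos.le fun x =>
    norm_taylorCoeff_ebasisDeriv_le hρ _ _ (wt_le_of_mem_Idx_floor hr hj) z

lemma summable_mul_ebasis [CompleteSpace E] (hρ : ∀ z, ‖ρ z‖ = St.ν z) (hr : 0 ≤ r)
    (hb : c0Fun b) (z : O) : Summable fun x => b x * ebasis St R ρ r x.1.1 x.1.2 z := by
  have := St.isUltrametricDist
  refine hb.summable_mul fun x => (norm_ebasis_le hρ _ _ _).trans
    (mul_le_of_le_one_right St.q_pos.le ?_)
  exact Real.rpow_le_one_of_one_le_of_nonpos St.one_lt_q.le (neg_nonpos.2 (by positivity))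

lemma epsTay_basisSum [CompleteSpace E] [CharZero E] (hρ : ∀ z, ‖ρ z‖ = St.ν z) (hr : 0 ≤ r)
    (hb : c0Fun b) (x y : O) :
    epsTay St ⌊r⌋₊ (basisSum ρ b) (basisSumDeriv ρ b) x y =
      ∑' k, b k * epsTay St ⌊r⌋₊ (ebasis St R ρ r k.1.1 k.1.2)
        (ebasisDeriv St R ρ r k.1.1 k.1.2) x y := by
  have := St.isUltrametricDist
  have h_summable_deriv (j : S → ℕ) (hj : j ∈ Idx S ⌊r⌋₊) : Summable fun k =>
      b k * taylorCoeff (ebasisDeriv St R ρ r k.1.1 k.1.2) j x * mpow St y j :=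
    (hb.summable_mul fun k => norm_taylorCoeff_ebasisDeriv_le hρ _ _
      (wt_le_of_mem_Idx_floor hr hj) x).mul_right _
  simp only [epsTay_eq, taylorCoeff_basisSumDeriv, mul_sub, Finset.mul_sum, ← mul_assoc,
    ← tsum_mul_right]
  rw [basisSum, ← Summable.tsum_finsetSum h_summable_deriv,
    ← (summable_mul_ebasis hρ hr hb (x + y)).tsum_sub (summable_sum h_summable_deriv)]

/-- The finitely many terms with large coefficients contribute nothing as soon as `h` exceeds their
levels. -/
lemma vanishesToOrder_epsTay_basisSum [CompleteSpace E] [CharZero E]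
    (hρ : ∀ z, ‖ρ z‖ = St.ν z) (hr : 0 ≤ r) (hb : c0Fun b) :
    VanishesToOrder St r (epsTay St ⌊r⌋₊ (basisSum ρ b) (basisSumDeriv ρ b)) := by
  have := St.isUltrametricDist
  have hq := St.q_pos
  intro ε hε
  have h_finite := hb (ε / St.q) (by positivity)
  refine ⟨h_finite.toFinset.sup fun k => lA St R k.1.1, fun h hh x z => ?_⟩
  rw [← le_div_iff₀ (by positivity), epsTay_basisSum hρ hr hb]
  refine IsUltrametricDist.norm_tsum_le_of_forall_le_of_nonneg (by positivity) fun k => ?_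
  rcases le_or_gt (ε / St.q) ‖b k‖ with hk | hk
  · have hl : lA St R k.1.1 ≤ h :=
      (Finset.le_sup (f := fun k : BasisIndex R Y r => lA St R k.1.1)
        (h_finite.mem_toFinset.2 hk)).trans hh
    rw [← Nat.add_sub_cancel' hl, pow_add, mul_assoc, epsTay_ebasis_eq_zero _ k.2.2.1, mul_zero,
      norm_zero]
    positivity
  · have h_ball : St.ν (St.ϖ ^ h * z) ≤ St.q⁻¹ ^ h := (St.mem_ball_iff _ h).1 ⟨z, rfl⟩
    rw [norm_mul]
    calc _ ≤ ε / St.q * (St.q * St.ν (St.ϖ ^ h * z) ^ r) :=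
          mul_le_mul hk.le (norm_epsTay_ebasis_le hρ hr _ k.2.2.1 x _) (norm_nonneg _)
            (by positivity)
      _ = ε * St.ν (St.ϖ ^ h * z) ^ r := by field_simp
      _ ≤ ε * (St.q⁻¹ ^ h) ^ r :=
          mul_le_mul_of_nonneg_left (Real.rpow_le_rpow (nu_nonneg hρ _) h_ball hr) hε.le
      _ = ε / St.q ^ (r * (h : ℝ)) := by rw [St.q_inv_pow_rpow, div_eq_mul_inv]

lemma isCrWith_basisSum [CompleteSpace E] [CharZero E] (hρ : ∀ z, ‖ρ z‖ = St.ν z) (hr : 0 ≤ r)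
    (hb : c0Fun b) : IsCrWith St r (basisSum ρ b) (basisSumDeriv ρ b) :=
  ⟨fun j hj => ⟨_, fun x => (norm_le_norm_taylorCoeff St _ j x).trans
    (norm_taylorCoeff_basisSumDeriv_le hρ hr hb hj x)⟩, vanishesToOrder_epsTay_basisSum hρ hr hb⟩

lemma CrNorm_basisSum_le [CompleteSpace E] [CharZero E] (hρ : ∀ z, ‖ρ z‖ = St.ν z) (hr : 0 ≤ r)
    (hb : c0Fun b) :
    CrNorm St r (basisSum ρ b) (basisSumDeriv ρ b) ≤ St.q * ⨆ x, ‖b x‖ := by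
  have := St.isUltrametricDist
  have h_nonneg : 0 ≤ St.q * ⨆ x, ‖b x‖ :=
    mul_nonneg St.q_pos.le (Real.iSup_nonneg fun _ => norm_nonneg _)
  refine max_le (Real.iSup_le (fun i => Real.iSup_le (fun x => ?_) h_nonneg) h_nonneg)
    (Real.iSup_le (fun x => Real.iSup_le (fun y => ?_) h_nonneg) h_nonneg)
  · exact norm_taylorCoeff_basisSumDeriv_le hρ hr hb i.2 x
  · have h_rpow := Real.rpow_nonneg (nu_nonneg hρ y) r
    refine div_le_of_le_mul₀ h_rpow h_nonneg ?_
    rw [epsTay_basisSum hρ hr hb, mul_right_comm]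
    exact hb.norm_tsum_mul_le (mul_nonneg St.q_pos.le h_rpow) fun k =>
      norm_epsTay_ebasis_le hρ hr _ k.2.2.1 x y

/-- At a point `a`, the derivatives `D_i e_{a',i',r}(a)` form a matrix which is triangular with
respect to the level of `a`, with nonzero diagonal. -/
lemma eq_zero_of_basisSum_eq_zero [CompleteSpace E] [CharZero E] (hρ : ∀ z, ‖ρ z‖ = St.ν z)
    (hr : 0 ≤ r) (hb : c0Fun b) (h0 : ∀ z, basisSum ρ b z = 0) : b = 0 := by
  have h_deriv (j : S → ℕ) (hj : j ∈ Idx S ⌊r⌋₊) (z : O) : basisSumDeriv ρ b j z = 0 :=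
    IsCrWith.deriv_eq_zero (funext h0 ▸ isCrWith_basisSum hρ hr hb) hr hj z
  suffices h_level : ∀ (n : ℕ) (x : BasisIndex R Y r), lA St R x.1.1 = n → b x = 0 from
    funext fun x => h_level _ x rfl
  intro n
  induction n using Nat.strong_induction_on with
  | _ n ih =>
    intro x hx
    have h_single := h_deriv x.1.2 x.2.2.1 x.1.1
    rw [basisSumDeriv, tsum_eq_single x fun x' hx' => ?_] at h_single
    · exact (mul_eq_zero.1 h_single).resolve_right (ebasisDeriv_self_ne_zero hρ _ _)
    · rcases lt_or_ge (lA St R x'.1.1) n with h_lt | h_ge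
      · rw [ih _ h_lt x' rfl, zero_mul]
      · rw [ebasisDeriv_eq_zero_of_lA_le x.2.1 x'.2.1 (hx.trans_le h_ge)
          fun h => hx' (Subtype.ext h), mul_zero]

lemma basisSum_injOn [CompleteSpace E] [CharZero E] (hρ : ∀ z, ‖ρ z‖ = St.ν z) (hr : 0 ≤ r)
    (Y : Set (S → ℕ)) :
    Set.InjOn (basisSum ρ : (BasisIndex R Y r → E) → O → E) {b | c0Fun b} := by
  intro b₁ hb₁ b₂ hb₂ h
  refine sub_eq_zero.1 (eq_zero_of_basisSum_eq_zero hρ hr (hb₁.sub hb₂) fun z => ?_)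
  have h_sub : basisSum ρ (b₁ - b₂) z = basisSum ρ b₁ z - basisSum ρ b₂ z := by
    simp only [basisSum, Pi.sub_apply, sub_mul]
    exact (summable_mul_ebasis hρ hr hb₁ z).tsum_sub (summable_mul_ebasis hρ hr hb₂ z)
  rw [h_sub, h, sub_self]

/-! ### The `C^r`-norm -/

lemma le_iSup_iSup {α β : Type*} {g : α → β → ℝ} {K : ℝ} (hg : ∀ x y, g x y ≤ K) (x : α)
    (y : β) : g x y ≤ ⨆ x, ⨆ y, g x y := by
  have : Nonempty β := ⟨y⟩
  exact (le_ciSup ⟨K, Set.forall_mem_range.2 (hg x)⟩ y).trans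
    (le_ciSup (f := fun x => ⨆ y, g x y) ⟨K, Set.forall_mem_range.2 fun x => ciSup_le (hg x)⟩ x)

lemma CrNorm_nonneg (St : Setting S O E) (r : ℝ) (f : O → E) (D : (S → ℕ) → O → E) :
    0 ≤ CrNorm St r f D :=
  le_max_of_le_left (Real.iSup_nonneg fun _ => Real.iSup_nonneg fun _ => norm_nonneg _)

namespace IsCrWith

lemma eq_taylorCoeff_zero (hf : IsCrWith St r f D) (hρ : ∀ z, ‖ρ z‖ = St.ν z) (hr : 0 ≤ r)
    (x : O) : f x = taylorCoeff D 0 x := by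
  have h_eps : epsTay St ⌊r⌋₊ f D x 0 = 0 :=
    VanishesToOrder.eq_zero_of_nu_eq_zero hf.2 hr x (by rw [← hρ, map_zero, norm_zero])
  rw [epsTay_eq, add_zero, sub_eq_zero, Finset.sum_eq_single_of_mem 0 zero_mem_Idx fun i _ hi => by
    rw [mpow_zero_left St hi, mul_zero], mpow_zero_right, mul_one] at h_eps
  exact h_eps

lemma exists_norm_taylorCoeff_le (hf : IsCrWith St r f D) :
    ∃ C, ∀ i ∈ Idx S ⌊r⌋₊, ∀ x, ‖taylorCoeff D i x‖ ≤ C := by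
  choose! C hC using hf.1
  obtain ⟨K, hK⟩ := ((Idx S ⌊r⌋₊).image fun i => C i / ‖(mfact i : E)‖).exists_le
  refine ⟨K, fun i hi x => (hK _ (Finset.mem_image_of_mem _ hi)).trans' ?_⟩
  rw [taylorCoeff, norm_div]
  exact div_le_div_of_nonneg_right (hC i hi x) (norm_nonneg _)

lemma exists_norm_epsTay_le (hf : IsCrWith St r f D) (hρ : ∀ z, ‖ρ z‖ = St.ν z) (hr : 0 ≤ r) :
    ∃ C, ∀ x y, ‖epsTay St ⌊r⌋₊ f D x y‖ ≤ C := by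
  have := St.isUltrametricDist
  obtain ⟨C, hC⟩ := hf.exists_norm_taylorCoeff_le
  refine ⟨C, fun x y => ?_⟩
  rw [epsTay_eq, hf.eq_taylorCoeff_zero hρ hr]
  refine (St.norm_sub_le_max _ _).trans (max_le (hC 0 zero_mem_Idx _)
    (IsUltrametricDist.norm_sum_le_of_forall_le_of_nonneg
      ((norm_nonneg _).trans (hC 0 zero_mem_Idx x)) fun i hi => ?_))
  rw [norm_mul]
  exact (mul_le_of_le_one_right (norm_nonneg _) (norm_mpow_le_one St y i)).trans (hC i hi x)

lemma norm_taylorCoeff_le_CrNorm (hf : IsCrWith St r f D) {i : S → ℕ} (hi : i ∈ Idx S ⌊r⌋₊)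
    (x : O) : ‖taylorCoeff D i x‖ ≤ CrNorm St r f D := by
  obtain ⟨C, hC⟩ := hf.exists_norm_taylorCoeff_le
  exact le_max_of_le_left (le_iSup_iSup (g := fun (i : Idx S ⌊r⌋₊) x => ‖taylorCoeff D i x‖)
    (fun i x => hC i i.2 x) ⟨i, hi⟩ x)

lemma norm_epsTay_le_CrNorm_mul (hf : IsCrWith St r f D) (hρ : ∀ z, ‖ρ z‖ = St.ν z) (hr : 0 ≤ r)
    (x y : O) : ‖epsTay St ⌊r⌋₊ f D x y‖ ≤ CrNorm St r f D * St.ν y ^ r := by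
  rcases (nu_nonneg hρ y).eq_or_lt with hy | hy
  · rw [VanishesToOrder.eq_zero_of_nu_eq_zero hf.2 hr x hy.symm, norm_zero, ← hy]
    exact mul_nonneg (CrNorm_nonneg St r f D) (Real.rpow_nonneg le_rfl r)
  obtain ⟨K, hK⟩ := VanishesToOrder.exists_norm_div_rpow_le hf.2 hr (nu_nonneg hρ)
    (hf.exists_norm_epsTay_le hρ hr)
  exact (div_le_iff₀ (Real.rpow_pos_of_pos hy r)).1 (le_max_of_le_right (le_iSup_iSup hK x y))

lemma norm_epsTay_uniformizer_pow_mul_le (hf : IsCrWith St r f D) (hρ : ∀ z, ‖ρ z‖ = St.ν z)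
    (hr : 0 ≤ r) (n : ℕ) (x z : O) :
    ‖epsTay St ⌊r⌋₊ f D x (St.ϖ ^ n * z)‖ ≤ CrNorm St r f D * (St.q ^ (r * (n : ℝ)))⁻¹ := by
  refine (hf.norm_epsTay_le_CrNorm_mul hρ hr x _).trans
    (mul_le_mul_of_nonneg_left ?_ (CrNorm_nonneg St r f D))
  exact St.q_inv_pow_rpow n r ▸
    Real.rpow_le_rpow (nu_nonneg hρ _) ((St.mem_ball_iff _ n).1 ⟨z, rfl⟩) hr

end IsCrWith

/-! ### Expansion in the basis -/

/-- The coefficient of `((z - a) / ϖ^{l(a)})^j` in the difference between the Taylor approximations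
of a function at the representatives of level `l(a)` and `l(a) - 1`, on the coset of `a`. -/
def levelCoeff (R : RepSystem St) (N : ℕ) (D : (S → ℕ) → O → E) (a : O) (j : S → ℕ) : E :=
  match lA St R a with
  | 0 => taylorCoeff D j a
  | n + 1 => taylorCoeffRemainder St N D j (R.rep n a) (a - R.rep n a) *
      mpow St (St.ϖ ^ (n + 1)) j

lemma levelCoeff_of_lA_eq_zero {a : O} (ha : lA St R a = 0) (j : S → ℕ) :
    levelCoeff R N D a j = taylorCoeff D j a := by
  rw [levelCoeff, ha]

lemma levelCoeff_of_lA_eq_succ {a : O} {n : ℕ} (ha : lA St R a = n + 1) (j : S → ℕ) :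
    levelCoeff R N D a j =
      taylorCoeffRemainder St N D j (R.rep n a) (a - R.rep n a) * mpow St (St.ϖ ^ (n + 1)) j := by
  rw [levelCoeff, ha]

lemma taylorCoeffRemainder_eq_zero {j : S → ℕ} (hj : j ∈ Idx S N)
    (hD : ∀ i ∈ Idx S N, j ≤ i → D i = 0) (x y : O) :
    taylorCoeffRemainder St N D j x y = 0 := by
  rw [taylorCoeffRemainder, taylorCoeff, hD j hj le_rfl, Pi.zero_apply, zero_div, zero_sub,
    neg_eq_zero]
  refine Finset.sum_eq_zero fun i hi => ?_
  by_cases hji : j ≤ i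
  · simp [taylorCoeff, hD i hi hji]
  · simp [mchoose_eq_zero hji]

lemma levelCoeff_eq_zero {j : S → ℕ} (hj : j ∈ Idx S N)
    (hD : ∀ i ∈ Idx S N, j ≤ i → D i = 0) (a : O) : levelCoeff R N D a j = 0 := by
  unfold levelCoeff
  split
  · rw [taylorCoeff, hD j hj le_rfl, Pi.zero_apply, zero_div]
  · rw [taylorCoeffRemainder_eq_zero hj hD, zero_mul]

lemma sum_levelCoeff_mul_coeval_sdiff (f : O → E) (n : ℕ) (z : O) :
    ∑ a ∈ R.A (n + 1) \ R.A n, ∑ j ∈ Idx S N,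
        levelCoeff R N D a j * coeval St a (lA St R a) j z =
      epsTay St N f D (R.rep n z) (z - R.rep n z) -
        epsTay St N f D (R.rep (n + 1) z) (z - R.rep (n + 1) z) := by
  have h_other (a : O) (ha : a ∈ R.A (n + 1) \ R.A n) (hne : a ≠ R.rep (n + 1) z) :
      ∑ j ∈ Idx S N, levelCoeff R N D a j * coeval St a (lA St R a) j z = 0 := by
    refine Finset.sum_eq_zero fun j _ => ?_
    rw [RepSystem.lA_eq_of_mem_sdiff ha, coeval_of_notMem, mul_zero]
    exact fun hz => hne (RepSystem.eq_rep (Finset.mem_sdiff.1 ha).1 hz)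
  obtain ⟨w, hw⟩ := R.exists_sub_rep_eq (n + 1) z
  have h_rep := R.rep_rep_succ n z
  set a := R.rep (n + 1) z
  by_cases ha_mem : a ∈ R.A n
  · rw [← h_rep, ← RepSystem.eq_rep ha_mem ⟨0, by simp⟩, sub_self]
    refine Finset.sum_eq_zero fun a' ha' => h_other a' ha' ?_
    rintro rfl
    exact (Finset.mem_sdiff.1 ha').2 ha_mem
  · have ha_sdiff : a ∈ R.A (n + 1) \ R.A n :=
      Finset.mem_sdiff.2 ⟨R.rep_mem (n + 1) z, ha_mem⟩
    have h_lA := RepSystem.lA_eq_of_mem_sdiff ha_sdiff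
    have h_eps := sum_taylorCoeffRemainder_mul_mpow (St := St) (N := N) f D (R.rep n z)
      (a - R.rep n z) (z - a)
    rw [sub_add_sub_cancel', add_sub_cancel] at h_eps
    rw [Finset.sum_eq_single_of_mem a ha_sdiff h_other, ← h_eps, hw]
    refine Finset.sum_congr rfl fun j _ => ?_
    rw [levelCoeff_of_lA_eq_succ h_lA, h_rep, h_lA, mpow_mul, mul_assoc,
      eq_add_of_sub_eq' hw, coeval_add_mul]

lemma sum_levelCoeff_mul_coeval (f : O → E) (n : ℕ) (z : O) :
    ∑ a ∈ R.A n, ∑ j ∈ Idx S N, levelCoeff R N D a j * coeval St a (lA St R a) j z =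
      f z - epsTay St N f D (R.rep n z) (z - R.rep n z) := by
  induction n with
  | zero =>
    have h_coeval (j : S → ℕ) : coeval St 0 0 j z = mpow St z j := by
      simpa using coeval_add_mul St 0 0 j z
    rw [R.rep_zero, R.hA0, Finset.sum_singleton, epsTay_eq, R.lA_zero]
    simp [levelCoeff_of_lA_eq_zero R.lA_zero, h_coeval]
  | succ n ih =>
    rw [← Finset.sum_sdiff (R.hmono n), ih, sum_levelCoeff_mul_coeval_sdiff f]
    ring

/-- The coefficient of `e_{a,j,r}` in the expansion of the function with derivatives `D`. -/
def basisCoeff (R : RepSystem St) (ρ : O →+* E) (r : ℝ) (D : (S → ℕ) → O → E) (a : O)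
    (j : S → ℕ) : E :=
  levelCoeff R ⌊r⌋₊ D a j / ρ St.ϖ ^ ⌊(lA St R a : ℝ) * r⌋₊

lemma basisCoeff_mul_ebasis (hρ : ∀ z, ‖ρ z‖ = St.ν z) (a z : O) (j : S → ℕ) :
    basisCoeff R ρ r D a j * ebasis St R ρ r a j z =
      levelCoeff R ⌊r⌋₊ D a j * coeval St a (lA St R a) j z := by
  rw [basisCoeff, ebasis, ← mul_assoc, div_mul_cancel₀ _ (rho_uniformizer_pow_ne_zero hρ _)]

lemma basisCoeff_of_lA_eq_zero {a : O} (ha : lA St R a = 0) (j : S → ℕ) :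
    basisCoeff R ρ r D a j = taylorCoeff D j a := by
  rw [basisCoeff, levelCoeff_of_lA_eq_zero ha, ha]
  simp

lemma exists_norm_basisCoeff_le_of_lA_eq_succ [CharZero E] (R : RepSystem St)
    (hρ : ∀ z, ‖ρ z‖ = St.ν z) (hr : 0 ≤ r) :
    ∃ c : ℝ, 0 ≤ c ∧ ∀ (f : O → E) (D : (S → ℕ) → O → E) (n : ℕ) (B : ℝ),
      (∀ x z, ‖epsTay St ⌊r⌋₊ f D x (St.ϖ ^ n * z)‖ ≤ B * (St.q ^ (r * (n : ℝ)))⁻¹) →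
      ∀ a, lA St R a = n + 1 → ∀ j ∈ Idx S ⌊r⌋₊, ‖basisCoeff R ρ r D a j‖ ≤ c * B := by
  obtain ⟨c, hc, h_remainder⟩ := exists_norm_taylorCoeffRemainder_mul_le St ⌊r⌋₊
  have hq := St.q_pos
  refine ⟨c * St.q ^ r, by positivity, fun f D n B hB a ha j hj => ?_⟩
  have h_level : ‖levelCoeff R ⌊r⌋₊ D a j‖ ≤ c * (B * (St.q ^ (r * (n : ℝ)))⁻¹) := by
    obtain ⟨y, hy⟩ := R.exists_sub_rep_eq n a
    rw [levelCoeff_of_lA_eq_succ ha, norm_mul, hy]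
    refine (h_remainder f D _ _ hB j hj (R.rep n a) y).trans' ?_
    rw [pow_succ, mpow_mul, norm_mul]
    gcongr
    exact mul_le_of_le_one_right (norm_nonneg _) (norm_mpow_le_one St _ j)
  have h_uniformizer := le_norm_rho_uniformizer_pow_floor hρ
    (show 0 ≤ (lA St R a : ℝ) * r by positivity)
  have h_nonneg : 0 ≤ c * St.q ^ r * B := by
    have hB_nonneg := nonneg_of_mul_nonneg_left ((norm_nonneg _).trans (hB 0 0))
      (show 0 < (St.q ^ (r * (n : ℝ)))⁻¹ by positivity)
    positivity
  rw [basisCoeff, norm_div]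
  refine div_le_of_le_mul₀ (norm_nonneg _) h_nonneg (h_level.trans ?_)
  calc c * (B * (St.q ^ (r * (n : ℝ)))⁻¹) = c * St.q ^ r * B * St.q ^ (-((lA St R a : ℝ) * r)) := by
        rw [ha, ← Real.rpow_neg hq.le, show -(r * (n : ℝ)) = r + -(((n + 1 : ℕ) : ℝ) * r) by
          push_cast; ring, Real.rpow_add hq]
        ring
    _ ≤ _ := mul_le_mul_of_nonneg_left h_uniformizer h_nonneg

lemma exists_norm_basisCoeff_le_CrNorm [CharZero E] (R : RepSystem St)
    (hρ : ∀ z, ‖ρ z‖ = St.ν z) (hr : 0 ≤ r) :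
    ∃ c : ℝ, 0 ≤ c ∧ ∀ (f : O → E) (D : (S → ℕ) → O → E), IsCrWith St r f D →
      ∀ a, ∀ j ∈ Idx S ⌊r⌋₊, ‖basisCoeff R ρ r D a j‖ ≤ c * CrNorm St r f D := by
  obtain ⟨c, -, h_coeff⟩ := exists_norm_basisCoeff_le_of_lA_eq_succ R hρ hr
  refine ⟨max 1 c, le_max_of_le_left zero_le_one, fun f D hf a j hj => ?_⟩
  have h_nonneg := CrNorm_nonneg St r f D
  rcases h_lA : lA St R a with _ | n
  · rw [basisCoeff_of_lA_eq_zero h_lA]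
    exact (hf.norm_taylorCoeff_le_CrNorm hj a).trans
      (le_mul_of_one_le_left h_nonneg (le_max_left 1 c))
  · exact (h_coeff f D n _ (hf.norm_epsTay_uniformizer_pow_mul_le hρ hr n) a h_lA j hj).trans
      (mul_le_mul_of_nonneg_right (le_max_right 1 c) h_nonneg)

/-- The finitely many indices of level at most `n`. -/
def levelIndices (R : RepSystem St) (Y : Set (S → ℕ)) (r : ℝ) (n : ℕ) :
    Finset (BasisIndex R Y r) :=
  (R.A n ×ˢ Idx S ⌊r⌋₊).subtype _

lemma mem_levelIndices {n : ℕ} {x : BasisIndex R Y r} :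
    x ∈ levelIndices R Y r n ↔ lA St R x.1.1 ≤ n := by
  rw [levelIndices, Finset.mem_subtype, Finset.mem_product, RepSystem.mem_A_iff_lA_le x.2.1,
    and_iff_left x.2.2.1]

lemma tendsto_levelIndices_atTop (R : RepSystem St) (Y : Set (S → ℕ)) (r : ℝ) :
    Filter.Tendsto (levelIndices R Y r) Filter.atTop Filter.atTop :=
  Filter.tendsto_atTop_finset_of_monotone
    (fun _ _ hmn _ hx => mem_levelIndices.2 ((mem_levelIndices.1 hx).trans hmn))
    fun _ => ⟨_, mem_levelIndices.2 le_rfl⟩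

lemma sum_levelIndices (hρ : ∀ z, ‖ρ z‖ = St.ν z) (hY : IsLowerSet Y)
    (hD : ∀ i ∈ Idx S ⌊r⌋₊, i ∉ Y → D i = 0) (f : O → E) (n : ℕ) (z : O) :
    ∑ x ∈ levelIndices R Y r n, basisCoeff R ρ r D x.1.1 x.1.2 * ebasis St R ρ r x.1.1 x.1.2 z =
      f z - epsTay St ⌊r⌋₊ f D (R.rep n z) (z - R.rep n z) := by
  rw [← sum_levelCoeff_mul_coeval f n z, ← Finset.sum_product', levelIndices]
  simp only [basisCoeff_mul_ebasis hρ]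
  rw [Finset.sum_subtype_eq_sum_filter (s := R.A n ×ˢ Idx S ⌊r⌋₊)
    (fun x : O × (S → ℕ) => levelCoeff R ⌊r⌋₊ D x.1 x.2 * coeval St x.1 (lA St R x.1) x.2 z)]
  refine Finset.sum_filter_of_ne fun x hx hne => ?_
  obtain ⟨hx₁, hx₂⟩ := Finset.mem_product.1 hx
  refine ⟨RepSystem.mem_Aall hx₁, hx₂, by_contra fun hxY => hne ?_⟩
  rw [levelCoeff_eq_zero hx₂ fun i hi hle => hD i hi fun hiY => hxY (hY hle hiY), zero_mul]

namespace IsCrWith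

lemma c0Fun_basisCoeff [CharZero E] (hf : IsCrWith St r f D) (hρ : ∀ z, ‖ρ z‖ = St.ν z)
    (hr : 0 ≤ r) :
    c0Fun fun x : BasisIndex R Y r => basisCoeff R ρ r D x.1.1 x.1.2 := by
  obtain ⟨c, hc, h_coeff⟩ := exists_norm_basisCoeff_le_of_lA_eq_succ R hρ hr
  intro ε hε
  obtain ⟨M, hM⟩ := hf.2 (ε / (c + 1)) (by positivity)
  refine (levelIndices R Y r M).finite_toSet.subset fun x hx => mem_levelIndices.2 ?_
  by_contra! h_lt
  obtain ⟨n, hn⟩ := Nat.exists_eq_add_one_of_ne_zero (Nat.ne_zero_of_lt h_lt)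
  have h_le := h_coeff f D n (ε / (c + 1)) (fun x z => ?_) x.1.1 hn x.1.2 x.2.2.1
  · have h_small : c * (ε / (c + 1)) < ε := by
      rw [← mul_div_assoc, div_lt_iff₀ (by positivity)]
      linarith
    exact (h_le.trans_lt h_small).not_ge hx
  · have hq := Real.rpow_pos_of_pos St.q_pos (r * n)
    rw [← div_eq_mul_inv, le_div_iff₀ hq]
    exact hM n (by omega) x z

lemma eq_basisSum [CompleteSpace E] [CharZero E] (hf : IsCrWith St r f D)
    (hρ : ∀ z, ‖ρ z‖ = St.ν z) (hr : 0 ≤ r) (hY : IsLowerSet Y)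
    (hD : ∀ i ∈ Idx S ⌊r⌋₊, i ∉ Y → D i = 0) (z : O) :
    f z = basisSum ρ (fun x : BasisIndex R Y r => basisCoeff R ρ r D x.1.1 x.1.2) z := by
  have h_sum := (summable_mul_ebasis hρ hr (hf.c0Fun_basisCoeff (Y := Y) (R := R) hρ hr)
    z).hasSum.comp (tendsto_levelIndices_atTop R Y r)
  have h_remainder : Filter.Tendsto
      (fun n => epsTay St ⌊r⌋₊ f D (R.rep n z) (z - R.rep n z)) Filter.atTop (nhds 0) := by
    refine Metric.tendsto_atTop.2 fun ε hε => ?_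
    obtain ⟨M, hM⟩ := VanishesToOrder.exists_norm_le hf.2 hr (half_pos hε)
    refine ⟨M, fun n hn => ?_⟩
    obtain ⟨y, hy⟩ := R.exists_sub_rep_eq n z
    rw [dist_zero_right, hy]
    exact (hM n hn _ y).trans_lt (half_lt_self hε)
  refine tendsto_nhds_unique ?_ h_sum
  simp only [Function.comp_def, sum_levelIndices hρ hY hD f]
  simpa using h_remainder.const_sub (f z)

end IsCrWith

theorem statement15_general [CompleteSpace E] [CharZero E] (St : Setting S O E)
    (R : RepSystem St) (ρ : O →+* E) (hρ : ∀ z, ‖ρ z‖ = St.ν z) {Y K : Set (S → ℕ)}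
    (hY : ∀ i, i ∈ Y ↔ ∀ k ∈ K, ¬ k ≤ i) {r : ℝ} (hr : 0 ≤ r) :
    ∃ C₁ C₂ : ℝ, 0 ≤ C₁ ∧ 0 ≤ C₂ ∧
      (∀ b : BasisIndex R Y r → E, c0Fun b →
        ∃ D, IsCrWith St r (basisSum ρ b) D ∧ (∀ k ∈ K, D k = 0) ∧
          CrNorm St r (basisSum ρ b) D ≤ C₁ * ⨆ x, ‖b x‖) ∧
      (∀ (f : O → E) (D : (S → ℕ) → O → E), IsCrWith St r f D → (∀ k ∈ K, D k = 0) →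
        ∃ b : BasisIndex R Y r → E, c0Fun b ∧ (∀ z, f z = basisSum ρ b z) ∧
          (⨆ x, ‖b x‖) ≤ C₂ * CrNorm St r f D) ∧
      (∀ b₁ b₂ : BasisIndex R Y r → E, c0Fun b₁ → c0Fun b₂ →
        (∀ z, basisSum ρ b₁ z = basisSum ρ b₂ z) → b₁ = b₂) := by
  have hY_lower : IsLowerSet Y := fun i j hji hi =>
    (hY j).2 fun k hk hkj => (hY i).1 hi k hk (hkj.trans hji)
  obtain ⟨c, hc, h_coeff⟩ := exists_norm_basisCoeff_le_CrNorm R hρ hr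
  refine ⟨St.q, c, St.q_pos.le, hc, fun b hb => ?_, fun f D hf hK => ?_,
    fun b₁ b₂ hb₁ hb₂ h => basisSum_injOn hρ hr Y hb₁ hb₂ (funext h)⟩
  · exact ⟨basisSumDeriv ρ b, isCrWith_basisSum hρ hr hb,
      fun k hk => basisSumDeriv_eq_zero hY_lower fun hkY => (hY k).1 hkY k hk le_rfl,
      CrNorm_basisSum_le hρ hr hb⟩
  · have hD (i : S → ℕ) (hi : i ∈ Idx S ⌊r⌋₊) (hiY : i ∉ Y) : D i = 0 := by
      simp only [hY, not_forall, not_not] at hiY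
      obtain ⟨k, hk, hki⟩ := hiY
      exact hf.deriv_eq_zero_of_le hr (hK k hk) hki hi
    exact ⟨fun x => basisCoeff R ρ r D x.1.1 x.1.2, hf.c0Fun_basisCoeff hρ hr,
      hf.eq_basisSum hρ hr hY_lower hD, Real.iSup_le (fun x => h_coeff f D hf _ _ x.2.2.1)
        (mul_nonneg hc (CrNorm_nonneg St r f D))⟩

omit [Fintype S] in
lemma forall_le_iff_forall_not_single_le (T : Set S) (d i : S → ℕ) :
    (∀ s ∉ T, i s ≤ d s) ↔ ∀ k ∈ (fun s => Pi.single s (d s + 1)) '' Tᶜ, ¬ k ≤ i := by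
  simp [Pi.single, update_le_iff]

end Differentiability

/-- the family `(e_{a,i,r})_{a ∈ A, i ∈ Y' ∩ I_{≤[r]}}` is a Banach basis of
the closed subspace `C^r(O, J', (d_σ)_{σ∈S∖J'})` of `C^r(O,E)` cut out by the equations
`∂^{d_σ+1}/∂z_σ^{d_σ+1} f = 0` for `σ ∉ J'`: the map
`c₀(A × (Y' ∩ I_{≤[r]})) → C^r(O, J', (d_σ))`, `(b_{a,i}) ↦ ∑ b_{a,i} e_{a,i,r}`, is an
isomorphism of Banach spaces. -/
theorem statement15 (St : Setting S O E) (R : RepSystem St) (ρ : O →+* E)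
    (hρ : ∀ z : O, ‖ρ z‖ = St.ν z) (J : Set S) (d : S → ℕ) (r : ℝ) (hr : 0 ≤ r) :
    ∃ C₁ C₂ : ℝ, 0 ≤ C₁ ∧ 0 ≤ C₂ ∧
      (∀ b : {x : O × (S → ℕ) //
          x.1 ∈ Aall St R ∧ x.2 ∈ Idx S ⌊r⌋₊ ∧ ∀ s ∉ Jp J d r, x.2 s ≤ d s} → E,
        c0Fun b →
        ∃ D, IsCrWith St r (fun z => ∑' x, b x * ebasis St R ρ r x.1.1 x.1.2 z) D ∧
          (∀ s ∉ Jp J d r, D (Pi.single s (d s + 1)) = 0) ∧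
          CrNorm St r (fun z => ∑' x, b x * ebasis St R ρ r x.1.1 x.1.2 z) D ≤
            C₁ * ⨆ x, ‖b x‖) ∧
      (∀ (f : O → E) (D : (S → ℕ) → O → E), IsCrWith St r f D →
        (∀ s ∉ Jp J d r, D (Pi.single s (d s + 1)) = 0) →
        ∃ b : {x : O × (S → ℕ) //
            x.1 ∈ Aall St R ∧ x.2 ∈ Idx S ⌊r⌋₊ ∧ ∀ s ∉ Jp J d r, x.2 s ≤ d s} → E,
          c0Fun b ∧
          (∀ z : O, f z = ∑' x, b x * ebasis St R ρ r x.1.1 x.1.2 z) ∧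
          (⨆ x, ‖b x‖) ≤ C₂ * CrNorm St r f D) ∧
      (∀ b₁ b₂ : {x : O × (S → ℕ) //
          x.1 ∈ Aall St R ∧ x.2 ∈ Idx S ⌊r⌋₊ ∧ ∀ s ∉ Jp J d r, x.2 s ≤ d s} → E,
        c0Fun b₁ → c0Fun b₂ →
        (∀ z : O, (∑' x, b₁ x * ebasis St R ρ r x.1.1 x.1.2 z) =
          ∑' x, b₂ x * ebasis St R ρ r x.1.1 x.1.2 z) →
        b₁ = b₂) := by
  have h := statement15_general St R ρ hρ (forall_le_iff_forall_not_single_le (Jp J d r) d) hr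
  simp only [Set.forall_mem_image] at h
  exact h

end CrPaper
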